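/- Pappus implies Dandelin–Gallucci. Let rk be a rank function satisfying the full 3D projective rank axiom system: (A1)–(A4); (A5) rk{P,Q} = 2 whenever P ≠ Q; (A6) for all points A, B, C, D with rk{A,B,C,D} ≤ 3 there exists J with rk{A,B,J} = 2 and rk{C,D,J} = 2; (A7) for all points A, B there exists C with rk{A,B,C} = rk{B,C} = rk{A,C} = 2; (A8) there exist points P₁, P₂, P₃, P₄ with rk{P₁,P₂,P₃,P₄} = 4; (A9) rk X ≤ 4 for every finite set X; (A10) for all A, B, C, A', B' with rk{A,B,C} = 3 and rk{A',B'} = 2 there exists M with rk{A,B,C,M} = 3 and rk{A',B',M} = 2. If rk satisfies the Pappus rank property, then rk satisfies the Dandelin–Gallucci rank property. -/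

import Mathlib

/-- Pappus rank property: for two triples of collinear, pairwise distinct
points on two distinct lines, the three intersection points of the cross
lines are collinear. -/
def PappusRank {Pt : Type*} [DecidableEq Pt] (rk : Finset Pt → ℕ) : Prop :=
  ∀ A B C A' B' C' X Y Z : Pt,
    rk {A, B, C} ≤ 2 → rk {A', B', C'} ≤ 2 →
    rk {A, B} = 2 → rk {A, C} = 2 → rk {B, C} = 2 →
    rk {A', B'} = 2 → rk {A', C'} = 2 → rk {B', C'} = 2 →
    rk {A, A'} = 2 → rk {A, B'} = 2 → rk {A, C'} = 2 →
    rk {B, A'} = 2 → rk {B, B'} = 2 → rk {B, C'} = 2 →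
    rk {C, A'} = 2 → rk {C, B'} = 2 → rk {C, C'} = 2 →
    3 ≤ rk {A, B, C, A', B', C'} →
    rk {A, B', X} ≤ 2 → rk {A', B, X} ≤ 2 →
    rk {A, C', Y} ≤ 2 → rk {A', C, Y} ≤ 2 →
    rk {B, C', Z} ≤ 2 → rk {B', C, Z} ≤ 2 →
    rk {X, Y, Z} ≤ 2

/-- A line is represented by an ordered pair of distinct points. -/
def IsLineRk {Pt : Type*} [DecidableEq Pt] (rk : Finset Pt → ℕ) (l : Pt × Pt) : Prop :=
  rk {l.1, l.2} = 2

/-- Two lines meet (are coplanar). -/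
def MeetRk {Pt : Type*} [DecidableEq Pt] (rk : Finset Pt → ℕ) (l m : Pt × Pt) : Prop :=
  rk {l.1, l.2, m.1, m.2} ≤ 3

/-- Two lines are skew. -/
def SkewRk {Pt : Type*} [DecidableEq Pt] (rk : Finset Pt → ℕ) (l m : Pt × Pt) : Prop :=
  rk {l.1, l.2, m.1, m.2} = 4

/-- Dandelin–Gallucci rank property: given lines a, b, c pairwise skew and
e, f, g pairwise skew such that every line among a, b, c meets every line
among e, f, g, any line d meeting e, f, g meets any line h meeting a, b, c. -/
def DGRank {Pt : Type*} [DecidableEq Pt] (rk : Finset Pt → ℕ) : Prop :=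
  ∀ a b c e f g d h : Pt × Pt,
    IsLineRk rk a → IsLineRk rk b → IsLineRk rk c →
    IsLineRk rk e → IsLineRk rk f → IsLineRk rk g →
    IsLineRk rk d → IsLineRk rk h →
    SkewRk rk a b → SkewRk rk a c → SkewRk rk b c →
    SkewRk rk e f → SkewRk rk e g → SkewRk rk f g →
    MeetRk rk a e → MeetRk rk a f → MeetRk rk a g →
    MeetRk rk b e → MeetRk rk b f → MeetRk rk b g →
    MeetRk rk c e → MeetRk rk c f → MeetRk rk c g →
    MeetRk rk d e → MeetRk rk d f → MeetRk rk d g →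
    MeetRk rk h a → MeetRk rk h b → MeetRk rk h c →
    MeetRk rk d h

/-!
The core is the case where `a, b, c, d` are pairwise skew and `h` is skew to `f` and `g`. The points
`P = a ∩ f`, `Q = b ∩ g`, `R = c ∩ h` span a plane, which cuts the plane `d ∨ e` in a line carrying
the traces `X, Y, Z` of `PQ`, `PR`, `QR`. Put `A, B, C = a ∩ e, b ∩ e, c ∩ e`, `A' = d ∩ f`,
`B' = d ∩ g` and `C' = d ∩ (a ∨ h)`. Intersecting `d ∨ e` with the planes `a ∨ g`, `b ∨ f`, `a ∨ h`,
`c ∨ f`, `c ∨ g` shows `X = AB' ∩ A'B`, `Y = AC' ∩ A'C` and `Z ∈ B'C`. By Pappus `BC' ∩ B'C` lies on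
`XY`, so it is `Z`, and then `C' ∈ BZ ⊆ b ∨ h`. Hence `C'` lies on `(a ∨ h) ∩ (b ∨ h) = h`.

In the other cases two transversals of three pairwise skew lines meet, and so they coincide.
-/

/-- The axioms (A1)–(A3): `rk` is the rank function of a matroid. -/
structure IsRankFunction {Pt : Type*} [DecidableEq Pt] (rk : Finset Pt → ℕ) : Prop where
  le_card : ∀ S : Finset Pt, rk S ≤ S.card
  mono : ∀ S T : Finset Pt, S ⊆ T → rk S ≤ rk T
  submodular : ∀ S T : Finset Pt, rk (S ∪ T) + rk (S ∩ T) ≤ rk S + rk T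

/-- The axioms (A1)–(A5): the matroid with rank function `rk` has neither loops nor parallel
points. -/
structure IsSimpleRank {Pt : Type*} [DecidableEq Pt] (rk : Finset Pt → ℕ) : Prop
    extends IsRankFunction rk where
  rk_singleton : ∀ p : Pt, rk {p} = 1
  rk_pair : ∀ p q : Pt, p ≠ q → rk {p, q} = 2

/-- The axioms (A1)–(A6) and (A10): coplanar lines have a common point, and so do a plane and a
line. -/
structure IsProjectiveRank {Pt : Type*} [DecidableEq Pt] (rk : Finset Pt → ℕ) : Prop
    extends IsSimpleRank rk where
  exists_line_inter_line : ∀ A B C D : Pt, rk {A, B, C, D} ≤ 3 →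
    ∃ J : Pt, rk {A, B, J} = 2 ∧ rk {C, D, J} = 2
  exists_plane_inter_line : ∀ A B C A' B' : Pt, rk {A, B, C} = 3 → rk {A', B'} = 2 →
    ∃ M : Pt, rk {A, B, C, M} = 3 ∧ rk {A', B', M} = 2

/-- The flat spanned by a finite set: the points whose addition does not increase the rank. -/
def rkSpan {Pt : Type*} [DecidableEq Pt] (rk : Finset Pt → ℕ) (S : Finset Pt) : Set Pt :=
  {p | rk (insert p S) ≤ rk S}

/-- The set of points of the line represented by a pair. -/
abbrev lineSpan {Pt : Type*} [DecidableEq Pt] (rk : Finset Pt → ℕ) (l : Pt × Pt) : Set Pt :=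
  rkSpan rk {l.1, l.2}

/-- The join of two lines; it is a plane when they are distinct and meet. -/
abbrev planeSpan {Pt : Type*} [DecidableEq Pt] (rk : Finset Pt → ℕ) (l m : Pt × Pt) : Set Pt :=
  rkSpan rk {l.1, l.2, m.1, m.2}

/-- Three pairwise skew lines. -/
structure PairwiseSkewRk {Pt : Type*} [DecidableEq Pt] (rk : Finset Pt → ℕ)
    (a b c : Pt × Pt) : Prop where
  skew₁₂ : SkewRk rk a b
  skew₁₃ : SkewRk rk a c
  skew₂₃ : SkewRk rk b c

/-- A line meeting three given lines. -/
structure IsTransversalRk {Pt : Type*} [DecidableEq Pt] (rk : Finset Pt → ℕ)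
    (l a b c : Pt × Pt) : Prop where
  isLine : IsLineRk rk l
  meet₁ : MeetRk rk l a
  meet₂ : MeetRk rk l b
  meet₃ : MeetRk rk l c

/-- Three distinct points of a set. -/
structure IsTripleIn {Pt : Type*} (S : Set Pt) (p q r : Pt) : Prop where
  mem₁ : p ∈ S
  mem₂ : q ∈ S
  mem₃ : r ∈ S
  ne₁₂ : p ≠ q
  ne₁₃ : p ≠ r
  ne₂₃ : q ≠ r

section

variable {Pt : Type*} [DecidableEq Pt] {rk : Finset Pt → ℕ} {S T : Finset Pt} {p q r : Pt}
  {A B C A' B' C' X Y Z : Pt} {a b c d e f g h k l m n : Pt × Pt}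

theorem mem_rkSpan_of_mem (hp : p ∈ S) : p ∈ rkSpan rk S := by
  simp [rkSpan, Finset.insert_eq_of_mem hp]

theorem left_mem_lineSpan : p ∈ lineSpan rk (p, q) :=
  mem_rkSpan_of_mem (by simp)

theorem right_mem_lineSpan : q ∈ lineSpan rk (p, q) :=
  mem_rkSpan_of_mem (by simp)

theorem lineSpan_swap (p q : Pt) : lineSpan rk (p, q) = lineSpan rk (q, p) :=
  congrArg (rkSpan rk) (Finset.pair_comm p q)

theorem mem_lineSpan_of_rk_le (hl : IsLineRk rk l) (hp : rk {l.1, l.2, p} ≤ 2) :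
    p ∈ lineSpan rk l := by
  have hperm : insert p {l.1, l.2} = ({l.1, l.2, p} : Finset Pt) := by grind
  change rk (insert p {l.1, l.2}) ≤ rk {l.1, l.2}
  rwa [hperm, hl]

theorem MeetRk.symm (hlm : MeetRk rk l m) : MeetRk rk m l := by
  unfold MeetRk at *
  convert hlm using 2
  grind

theorem SkewRk.symm (hlm : SkewRk rk l m) : SkewRk rk m l := by
  unfold SkewRk at *
  convert hlm using 2
  grind

namespace IsRankFunction

theorem rk_union_le_of_subset_rkSpan (H : IsRankFunction rk) (hT : (T : Set Pt) ⊆ rkSpan rk S) :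
    rk (S ∪ T) ≤ rk S := by
  induction T using Finset.induction_on with
  | empty => simp
  | insert p T _ ih =>
    rw [Finset.coe_insert, Set.insert_subset_iff] at hT
    have hp : rk (insert p S) ≤ rk S := hT.1
    have hT' : rk (S ∪ T) ≤ rk S := ih hT.2
    have hsub := H.submodular (insert p S) (S ∪ T)
    have hinter : rk S ≤ rk (insert p S ∩ (S ∪ T)) := H.mono _ _ (by grind)
    have hunion : rk (S ∪ insert p T) ≤ rk (insert p S ∪ (S ∪ T)) := H.mono _ _ (by grind)
    omega

theorem rk_le_of_subset_rkSpan (H : IsRankFunction rk) (hT : (T : Set Pt) ⊆ rkSpan rk S) :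
    rk T ≤ rk S :=
  (H.mono _ _ Finset.subset_union_right).trans (H.rk_union_le_of_subset_rkSpan hT)

theorem rkSpan_subset_rkSpan (H : IsRankFunction rk) (hT : (T : Set Pt) ⊆ rkSpan rk S) :
    rkSpan rk T ⊆ rkSpan rk S := by
  intro p (hp : rk (insert p T) ≤ rk T)
  have hST := H.rk_union_le_of_subset_rkSpan hT
  have hsub := H.submodular (insert p T) (S ∪ T)
  have hinter : rk T ≤ rk (insert p T ∩ (S ∪ T)) := H.mono _ _ (by grind)
  have hunion : rk (insert p S) ≤ rk (insert p T ∪ (S ∪ T)) := H.mono _ _ (by grind)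
  change rk (insert p S) ≤ rk S
  omega

theorem rkSpan_mono (H : IsRankFunction rk) (hTS : T ⊆ S) : rkSpan rk T ⊆ rkSpan rk S :=
  H.rkSpan_subset_rkSpan fun _ hp => mem_rkSpan_of_mem (hTS hp)

theorem rkSpan_subset_rkSpan_of_rk_le (H : IsRankFunction rk) (hT : (T : Set Pt) ⊆ rkSpan rk S)
    (hrk : rk S ≤ rk T) : rkSpan rk S ⊆ rkSpan rk T := by
  intro p hp
  have hpT : ((insert p T : Finset Pt) : Set Pt) ⊆ rkSpan rk S := by
    rw [Finset.coe_insert]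
    exact Set.insert_subset hp hT
  exact (H.rk_le_of_subset_rkSpan hpT).trans hrk

theorem rk_lt_of_subset_rkSpan_inter (H : IsRankFunction rk) {S' : Finset Pt}
    (hT : (T : Set Pt) ⊆ rkSpan rk S ∩ rkSpan rk S') (hSS' : ¬ rkSpan rk S ⊆ rkSpan rk S') :
    rk T < rk S := by
  by_contra! hrk
  rw [Set.subset_inter_iff] at hT
  exact hSS' ((H.rkSpan_subset_rkSpan_of_rk_le hT.1 hrk).trans (H.rkSpan_subset_rkSpan hT.2))

theorem rk_pair_le (H : IsRankFunction rk) (p q : Pt) : rk {p, q} ≤ 2 :=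
  (H.le_card _).trans Finset.card_le_two

theorem rk_triple_le (H : IsRankFunction rk) (p q r : Pt) : rk {p, q, r} ≤ 3 :=
  (H.le_card _).trans Finset.card_le_three

theorem lineSpan_subset_rkSpan (H : IsRankFunction rk) (hp : p ∈ rkSpan rk S)
    (hq : q ∈ rkSpan rk S) : lineSpan rk (p, q) ⊆ rkSpan rk S :=
  H.rkSpan_subset_rkSpan (by simp [Set.insert_subset_iff, hp, hq])

theorem lineSpan_subset_planeSpan_left (H : IsRankFunction rk) (l m : Pt × Pt) :
    lineSpan rk l ⊆ planeSpan rk l m :=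
  H.rkSpan_mono (by grind)

theorem lineSpan_subset_planeSpan_right (H : IsRankFunction rk) (l m : Pt × Pt) :
    lineSpan rk m ⊆ planeSpan rk l m :=
  H.rkSpan_mono (by grind)

theorem lineSpan_subset_planeSpan (H : IsRankFunction rk) (hp : p ∈ lineSpan rk l)
    (hq : q ∈ lineSpan rk m) : lineSpan rk (p, q) ⊆ planeSpan rk l m :=
  H.lineSpan_subset_rkSpan (H.lineSpan_subset_planeSpan_left l m hp)
    (H.lineSpan_subset_planeSpan_right l m hq)

theorem rk_quadruple_le_of_lineSpan_subset (H : IsRankFunction rk)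
    (hl : lineSpan rk l ⊆ rkSpan rk S) (hm : lineSpan rk m ⊆ rkSpan rk S) :
    rk {l.1, l.2, m.1, m.2} ≤ rk S := by
  refine H.rk_le_of_subset_rkSpan ?_
  simp only [Finset.coe_insert, Finset.coe_singleton, Set.insert_subset_iff,
    Set.singleton_subset_iff]
  exact ⟨hl left_mem_lineSpan, hl right_mem_lineSpan, hm left_mem_lineSpan, hm right_mem_lineSpan⟩

theorem rk_le_two_of_mem_lineSpan (H : IsRankFunction rk) (hp : p ∈ lineSpan rk l)
    (hq : q ∈ lineSpan rk l) (hr : r ∈ lineSpan rk l) : rk {p, q, r} ≤ 2 :=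
  (H.rk_le_of_subset_rkSpan (by simp [Set.insert_subset_iff, hp, hq, hr])).trans
    (H.rk_pair_le l.1 l.2)

theorem not_meetRk_iff (H : IsRankFunction rk) : ¬ MeetRk rk l m ↔ SkewRk rk l m := by
  have hcard := (H.le_card {l.1, l.2, m.1, m.2}).trans Finset.card_le_four
  unfold MeetRk SkewRk
  omega

theorem isLineRk_left_of_skewRk (H : IsRankFunction rk) (hlm : SkewRk rk l m) :
    IsLineRk rk l := by
  have hsub := H.submodular {l.1, l.2} {m.1, m.2}
  have hunion : rk {l.1, l.2, m.1, m.2} ≤ rk ({l.1, l.2} ∪ {m.1, m.2}) := H.mono _ _ (by grind)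
  have hl := H.rk_pair_le l.1 l.2
  have hm := H.rk_pair_le m.1 m.2
  unfold SkewRk at hlm
  unfold IsLineRk
  omega

theorem isLineRk_right_of_skewRk (H : IsRankFunction rk) (hlm : SkewRk rk l m) :
    IsLineRk rk m :=
  H.isLineRk_left_of_skewRk hlm.symm

theorem lineSpan_not_subset_of_skewRk (H : IsRankFunction rk) (hlm : SkewRk rk l m)
    (hS : rk S ≤ 3) (hl : lineSpan rk l ⊆ rkSpan rk S) : ¬ lineSpan rk m ⊆ rkSpan rk S :=
  fun hm => H.not_meetRk_iff.mpr hlm ((H.rk_quadruple_le_of_lineSpan_subset hl hm).trans hS)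

theorem meetRk_of_lineSpan_subset (H : IsRankFunction rk)
    (hlk : lineSpan rk l ⊆ lineSpan rk k) (hkm : MeetRk rk k m) : MeetRk rk l m :=
  (H.rk_quadruple_le_of_lineSpan_subset (hlk.trans (H.lineSpan_subset_planeSpan_left k m))
    (H.lineSpan_subset_planeSpan_right k m)).trans hkm

end IsRankFunction

namespace IsSimpleRank

theorem lineSpan_subset_lineSpan (H : IsSimpleRank rk) (hpq : p ≠ q) (hp : p ∈ lineSpan rk l)
    (hq : q ∈ lineSpan rk l) : lineSpan rk l ⊆ lineSpan rk (p, q) :=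
  H.rkSpan_subset_rkSpan_of_rk_le (by simp [Set.insert_subset_iff, hp, hq])
    ((H.rk_pair_le _ _).trans (H.rk_pair p q hpq).ge)

theorem lineSpan_subset_of_mem (H : IsSimpleRank rk) (hpq : p ≠ q) (hp : p ∈ lineSpan rk l)
    (hq : q ∈ lineSpan rk l) (hpS : p ∈ rkSpan rk S) (hqS : q ∈ rkSpan rk S) :
    lineSpan rk l ⊆ rkSpan rk S :=
  (H.lineSpan_subset_lineSpan hpq hp hq).trans (H.lineSpan_subset_rkSpan hpS hqS)

theorem mem_lineSpan_exchange (H : IsSimpleRank rk) (hr : r ∈ lineSpan rk (p, q)) (hpr : p ≠ r) :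
    q ∈ lineSpan rk (p, r) :=
  H.lineSpan_subset_lineSpan hpr left_mem_lineSpan hr right_mem_lineSpan

theorem eq_of_mem_lineSpan_inter {o : Pt} (H : IsSimpleRank rk) (hr : r ∉ lineSpan rk (o, q))
    (hpq : p ∈ lineSpan rk (o, q)) (hpr : p ∈ lineSpan rk (o, r)) : p = o := by
  by_contra hpo
  exact hr (H.lineSpan_subset_rkSpan left_mem_lineSpan hpq
    (H.mem_lineSpan_exchange hpr (Ne.symm hpo)))

theorem cross_points_ne (H : IsSimpleRank rk)
    (hA : A ∈ lineSpan rk l) (hB : B ∈ lineSpan rk l) (hAB : A ≠ B) (hA'l : A' ∉ lineSpan rk l)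
    (hB' : B' ∈ lineSpan rk m) (hC' : C' ∈ lineSpan rk m) (hBC' : B' ≠ C')
    (hAm : A ∉ lineSpan rk m) (hX : X ∈ lineSpan rk (A, B')) (hX' : X ∈ lineSpan rk (B, A'))
    (hY : Y ∈ lineSpan rk (A, C')) : X ≠ Y := by
  rintro rfl
  have hC'AB' : C' ∉ lineSpan rk (A, B') := fun hmem => by
    rw [lineSpan_swap] at hmem
    exact hAm (H.lineSpan_subset_rkSpan hB' hC' (H.mem_lineSpan_exchange hmem hBC'))
  obtain rfl : X = A := H.eq_of_mem_lineSpan_inter hC'AB' hX hY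
  exact hA'l (H.lineSpan_subset_rkSpan hB hA (H.mem_lineSpan_exchange hX' hAB.symm))

theorem cross_point_notMem_lineSpan (H : IsSimpleRank rk)
    (hA : A ∈ lineSpan rk l) (hC : C ∈ lineSpan rk l) (hAC : A ≠ C) (hB'l : B' ∉ lineSpan rk l)
    (hA' : A' ∈ lineSpan rk m) (hB' : B' ∈ lineSpan rk m) (hAB' : A' ≠ B')
    (hBm : B ∉ lineSpan rk m) (hX : X ∈ lineSpan rk (A, B')) (hX' : X ∈ lineSpan rk (B, A')) :
    X ∉ lineSpan rk (C, B') := by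
  intro hXCB'
  rw [lineSpan_swap] at hX hX' hXCB'
  have hCB'A : C ∉ lineSpan rk (B', A) := fun hmem => by
    rw [lineSpan_swap] at hmem
    exact hB'l (H.lineSpan_subset_rkSpan hA hC (H.mem_lineSpan_exchange hmem hAC))
  obtain rfl : X = B' := H.eq_of_mem_lineSpan_inter hCB'A hX hXCB'
  exact hBm (H.lineSpan_subset_rkSpan hA' hB' (H.mem_lineSpan_exchange hX' hAB'))

theorem meetRk_of_mem (H : IsSimpleRank rk) (hpl : p ∈ lineSpan rk l) (hpm : p ∈ lineSpan rk m) :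
    MeetRk rk l m := by
  have hsub := H.submodular (insert p {l.1, l.2}) (insert p {m.1, m.2})
  have hinter : rk {p} ≤ rk (insert p {l.1, l.2} ∩ insert p {m.1, m.2}) := H.mono _ _ (by grind)
  have hunion : rk {l.1, l.2, m.1, m.2} ≤ rk (insert p {l.1, l.2} ∪ insert p {m.1, m.2}) :=
    H.mono _ _ (by grind)
  have hl : rk (insert p {l.1, l.2}) ≤ 2 := le_trans hpl (H.rk_pair_le _ _)
  have hm : rk (insert p {m.1, m.2}) ≤ 2 := le_trans hpm (H.rk_pair_le _ _)
  have hp := H.rk_singleton p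
  unfold MeetRk
  omega

theorem notMem_lineSpan_of_skewRk (H : IsSimpleRank rk) (hlm : SkewRk rk l m)
    (hp : p ∈ lineSpan rk l) : p ∉ lineSpan rk m :=
  fun hp' => H.not_meetRk_iff.mpr hlm (H.meetRk_of_mem hp hp')

theorem ne_of_skewRk (H : IsSimpleRank rk) (hlm : SkewRk rk l m) (hp : p ∈ lineSpan rk l)
    (hq : q ∈ lineSpan rk m) : p ≠ q :=
  fun hpq => H.notMem_lineSpan_of_skewRk hlm hp (hpq ▸ hq)

theorem mem_lineSpan_of_mem_planeSpan_inter (H : IsSimpleRank rk) (hlk : SkewRk rk l k)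
    (hlm : MeetRk rk l m) (hkn : MeetRk rk k n)
    (hpl : p ∈ lineSpan rk l) (hpn : p ∈ lineSpan rk n)
    (hqk : q ∈ lineSpan rk k) (hqlm : q ∈ planeSpan rk l m)
    (hrlm : r ∈ planeSpan rk l m) (hrkn : r ∈ planeSpan rk k n) : r ∈ lineSpan rk (p, q) := by
  have hplanes : ¬ planeSpan rk l m ⊆ planeSpan rk k n := fun hsub =>
    H.lineSpan_not_subset_of_skewRk hlk hkn ((H.lineSpan_subset_planeSpan_left l m).trans hsub)
      (H.lineSpan_subset_planeSpan_left k n)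
  have hpqr : (({p, q, r} : Finset Pt) : Set Pt) ⊆ planeSpan rk l m ∩ planeSpan rk k n := by
    simp [Set.insert_subset_iff, H.lineSpan_subset_planeSpan_left l m hpl,
      H.lineSpan_subset_planeSpan_right k n hpn, hqlm,
      H.lineSpan_subset_planeSpan_left k n hqk, hrlm, hrkn]
  have hrk : rk {p, q, r} < 3 := (H.rk_lt_of_subset_rkSpan_inter hpqr hplanes).trans_le hlm
  exact mem_lineSpan_of_rk_le (H.rk_pair p q (H.ne_of_skewRk hlk hpl hqk))
    (Nat.le_of_lt_succ hrk)

theorem mem_lineSpan_of_mem_planeSpan_common (H : IsSimpleRank rk) (hlm : SkewRk rk l m)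
    (hk : IsLineRk rk k) (hlk : MeetRk rk l k) (hmk : MeetRk rk m k)
    (hpl : p ∈ planeSpan rk l k) (hpm : p ∈ planeSpan rk m k) : p ∈ lineSpan rk k := by
  have hplanes : ¬ planeSpan rk l k ⊆ planeSpan rk m k := fun hsub =>
    H.lineSpan_not_subset_of_skewRk hlm hmk ((H.lineSpan_subset_planeSpan_left l k).trans hsub)
      (H.lineSpan_subset_planeSpan_left m k)
  have hright : ∀ {x n}, x ∈ lineSpan rk k → x ∈ planeSpan rk n k :=
    fun hx => H.lineSpan_subset_planeSpan_right _ k hx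
  have hkp : (({k.1, k.2, p} : Finset Pt) : Set Pt) ⊆ planeSpan rk l k ∩ planeSpan rk m k := by
    simp [Set.insert_subset_iff, hright left_mem_lineSpan, hright right_mem_lineSpan, hpl, hpm]
  have hrk : rk {k.1, k.2, p} < 3 := (H.rk_lt_of_subset_rkSpan_inter hkp hplanes).trans_le hlk
  exact mem_lineSpan_of_rk_le hk (Nat.le_of_lt_succ hrk)

end IsSimpleRank

theorem IsRankFunction.rk_le_two_of_triangle_section (H : IsRankFunction rk) {P Q R : Pt}
    (hP : P ∉ rkSpan rk S) (hX : X ∈ lineSpan rk (P, Q)) (hY : Y ∈ lineSpan rk (P, R))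
    (hZ : Z ∈ lineSpan rk (Q, R)) (hXS : X ∈ rkSpan rk S) (hYS : Y ∈ rkSpan rk S)
    (hZS : Z ∈ rkSpan rk S) : rk {X, Y, Z} ≤ 2 := by
  have hplanes : ¬ rkSpan rk {P, Q, R} ⊆ rkSpan rk S := fun hsub =>
    hP (hsub (mem_rkSpan_of_mem (by simp)))
  have hXYZ : (({X, Y, Z} : Finset Pt) : Set Pt) ⊆ rkSpan rk {P, Q, R} ∩ rkSpan rk S := by
    have hX' : X ∈ rkSpan rk {P, Q, R} := H.rkSpan_mono (by grind) hX
    have hY' : Y ∈ rkSpan rk {P, Q, R} := H.rkSpan_mono (by grind) hY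
    have hZ' : Z ∈ rkSpan rk {P, Q, R} := H.rkSpan_mono (by grind) hZ
    simp [Set.insert_subset_iff, *]
  exact Nat.le_of_lt_succ
    ((H.rk_lt_of_subset_rkSpan_inter hXYZ hplanes).trans_le (H.rk_triple_le P Q R))

namespace IsProjectiveRank

theorem exists_mem_lineSpan_inter (H : IsProjectiveRank rk) (hl : IsLineRk rk l)
    (hm : IsLineRk rk m) (hlm : MeetRk rk l m) : ∃ p, p ∈ lineSpan rk l ∧ p ∈ lineSpan rk m := by
  obtain ⟨p, hpl, hpm⟩ := H.exists_line_inter_line _ _ _ _ hlm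
  exact ⟨p, mem_lineSpan_of_rk_le hl hpl.le, mem_lineSpan_of_rk_le hm hpm.le⟩

theorem notMem_planeSpan_of_notMem_lineSpan (H : IsProjectiveRank rk) (hkm : SkewRk rk k m)
    (hl : IsLineRk rk l) (hlm : MeetRk rk l m) (hlk : MeetRk rk l k) (hpk : p ∈ lineSpan rk k)
    (hpl : p ∉ lineSpan rk l) : p ∉ planeSpan rk l m := by
  obtain ⟨q, hql, hqk⟩ := H.exists_mem_lineSpan_inter hl (H.isLineRk_left_of_skewRk hkm) hlk
  intro hp
  have hqp : q ≠ p := fun hqp => hpl (hqp ▸ hql)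
  have hk : lineSpan rk k ⊆ planeSpan rk l m :=
    H.lineSpan_subset_of_mem hqp hqk hpk (H.lineSpan_subset_planeSpan_left l m hql) hp
  exact H.lineSpan_not_subset_of_skewRk hkm hlm hk (H.lineSpan_subset_planeSpan_right l m)

theorem exists_mem_planeSpan_inter_lineSpan (H : IsProjectiveRank rk) (hl : IsLineRk rk l)
    (hpm : p ∈ lineSpan rk m) (hpl : p ∉ lineSpan rk l) (hk : IsLineRk rk k) :
    ∃ q ∈ planeSpan rk l m, q ∈ lineSpan rk k := by
  have hrk : rk {l.1, l.2, p} = 3 := by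
    have hle := H.rk_triple_le l.1 l.2 p
    have hgt : ¬ rk {l.1, l.2, p} ≤ 2 := fun h => hpl (mem_lineSpan_of_rk_le hl h)
    omega
  obtain ⟨q, hq, hqk⟩ := H.exists_plane_inter_line _ _ _ _ _ hrk hk
  refine ⟨q, ?_, mem_lineSpan_of_rk_le hk hqk.le⟩
  have hplane : (({l.1, l.2, p} : Finset Pt) : Set Pt) ⊆ planeSpan rk l m := by
    simp only [Finset.coe_insert, Finset.coe_singleton, Set.insert_subset_iff,
      Set.singleton_subset_iff]
    exact ⟨H.lineSpan_subset_planeSpan_left l m left_mem_lineSpan,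
      H.lineSpan_subset_planeSpan_left l m right_mem_lineSpan,
      H.lineSpan_subset_planeSpan_right l m hpm⟩
  have hperm : insert q {l.1, l.2, p} = ({l.1, l.2, p, q} : Finset Pt) := by grind
  refine H.rkSpan_subset_rkSpan hplane ?_
  change rk (insert q {l.1, l.2, p}) ≤ _
  rw [hperm, hq, hrk]

theorem exists_triangle_section (H : IsProjectiveRank rk) {P Q R : Pt} (hl : IsLineRk rk l)
    (hpm : p ∈ lineSpan rk m) (hpl : p ∉ lineSpan rk l) (hPQ : P ≠ Q) (hPR : P ≠ R) (hQR : Q ≠ R)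
    (hP : P ∉ planeSpan rk l m) :
    ∃ X Y Z, X ∈ lineSpan rk (P, Q) ∧ Y ∈ lineSpan rk (P, R) ∧ Z ∈ lineSpan rk (Q, R) ∧
      X ∈ planeSpan rk l m ∧ Y ∈ planeSpan rk l m ∧ Z ∈ planeSpan rk l m ∧ rk {X, Y, Z} ≤ 2 := by
  have trace : ∀ {q r}, q ≠ r → ∃ x ∈ planeSpan rk l m, x ∈ lineSpan rk (q, r) := fun hqr =>
    H.exists_mem_planeSpan_inter_lineSpan hl hpm hpl (H.rk_pair _ _ hqr)
  obtain ⟨X, hX, hXPQ⟩ := trace hPQ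
  obtain ⟨Y, hY, hYPR⟩ := trace hPR
  obtain ⟨Z, hZ, hZQR⟩ := trace hQR
  exact ⟨X, Y, Z, hXPQ, hYPR, hZQR, hX, hY, hZ,
    H.rk_le_two_of_triangle_section hP hXPQ hYPR hZQR hX hY hZ⟩

theorem exists_mem_inter_or_lineSpan_subset_planeSpan (H : IsProjectiveRank rk)
    (ha : IsLineRk rk a) (hd : IsLineRk rk d) (hk : IsLineRk rk k) (hak : MeetRk rk a k)
    (hdk : MeetRk rk d k) :
    (∃ p ∈ lineSpan rk k, p ∈ lineSpan rk a ∧ p ∈ lineSpan rk d) ∨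
      lineSpan rk k ⊆ planeSpan rk a d := by
  obtain ⟨p, hpa, hpk⟩ := H.exists_mem_lineSpan_inter ha hk hak
  obtain ⟨q, hqd, hqk⟩ := H.exists_mem_lineSpan_inter hd hk hdk
  by_cases hpq : p = q
  · exact .inl ⟨p, hpk, hpa, hpq ▸ hqd⟩
  · exact .inr (H.lineSpan_subset_of_mem hpq hpk hqk (H.lineSpan_subset_planeSpan_left a d hpa)
      (H.lineSpan_subset_planeSpan_right a d hqd))

/- Two skew lines cannot both lie in the plane `a ∨ d`, so at least two of `e, f, g` pass through
a common point of `a` and `d`. -/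
theorem lineSpan_subset_of_isTransversalRk (H : IsProjectiveRank rk)
    (hefg : PairwiseSkewRk rk e f g) (ha : IsTransversalRk rk a e f g)
    (hd : IsTransversalRk rk d e f g) (had : MeetRk rk a d) :
    lineSpan rk d ⊆ lineSpan rk a := by
  have subset_of_common : ∀ {k m p q}, SkewRk rk k m → p ∈ lineSpan rk k → q ∈ lineSpan rk m →
      p ∈ lineSpan rk a ∧ p ∈ lineSpan rk d → q ∈ lineSpan rk a ∧ q ∈ lineSpan rk d →
      lineSpan rk d ⊆ lineSpan rk a := fun hkm hpk hqm hp hq =>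
    H.lineSpan_subset_of_mem (H.ne_of_skewRk hkm hpk hqm) hp.2 hq.2 hp.1 hq.1
  have he := H.isLineRk_left_of_skewRk hefg.skew₁₂
  have hf := H.isLineRk_left_of_skewRk hefg.skew₂₃
  have hg := H.isLineRk_right_of_skewRk hefg.skew₂₃
  obtain ⟨p, hpe, hp⟩ | he_plane := H.exists_mem_inter_or_lineSpan_subset_planeSpan
      ha.isLine hd.isLine he ha.meet₁ hd.meet₁ <;>
    obtain ⟨q, hqf, hq⟩ | hf_plane := H.exists_mem_inter_or_lineSpan_subset_planeSpan
      ha.isLine hd.isLine hf ha.meet₂ hd.meet₂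
  · exact subset_of_common hefg.skew₁₂ hpe hqf hp hq
  all_goals
    obtain ⟨r, hrg, hr⟩ | hg_plane := H.exists_mem_inter_or_lineSpan_subset_planeSpan
      ha.isLine hd.isLine hg ha.meet₃ hd.meet₃
  · exact subset_of_common hefg.skew₁₃ hpe hrg hp hr
  · exact absurd hg_plane (H.lineSpan_not_subset_of_skewRk hefg.skew₂₃ had hf_plane)
  · exact subset_of_common hefg.skew₂₃ hqf hrg hq hr
  · exact absurd hg_plane (H.lineSpan_not_subset_of_skewRk hefg.skew₁₃ had he_plane)
  all_goals exact absurd hf_plane (H.lineSpan_not_subset_of_skewRk hefg.skew₁₂ had he_plane)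

theorem skewRk_of_isTransversalRk (H : IsProjectiveRank rk)
    (hefg : PairwiseSkewRk rk e f g) (ha : IsTransversalRk rk a e f g)
    (hd : IsTransversalRk rk d e f g) (hah : MeetRk rk a h) (hdh : ¬ MeetRk rk d h) :
    SkewRk rk a d :=
  H.not_meetRk_iff.mp fun had => hdh
    (H.meetRk_of_lineSpan_subset (H.lineSpan_subset_of_isTransversalRk hefg ha hd had) hah)

theorem exists_cross_points (H : IsProjectiveRank rk)
    (habc : PairwiseSkewRk rk a b c) (hefg : PairwiseSkewRk rk e f g)
    (had : SkewRk rk a d) (hbd : SkewRk rk b d) (hcd : SkewRk rk c d)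
    (ha : IsTransversalRk rk a e f g) (hb : IsTransversalRk rk b e f g)
    (hc : IsTransversalRk rk c e f g) (hd : IsTransversalRk rk d e f g)
    (hh : IsTransversalRk rk h a b c)
    (hA : A ∈ lineSpan rk a ∩ lineSpan rk e) (hB : B ∈ lineSpan rk b ∩ lineSpan rk e)
    (hC : C ∈ lineSpan rk c ∩ lineSpan rk e) (hA' : A' ∈ lineSpan rk d ∩ lineSpan rk f)
    (hB' : B' ∈ lineSpan rk d ∩ lineSpan rk g) (hC' : C' ∈ lineSpan rk d ∩ planeSpan rk a h) :
    ∃ X Y Z, X ∈ lineSpan rk (A, B') ∧ X ∈ lineSpan rk (B, A') ∧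
      Y ∈ lineSpan rk (A, C') ∧ Y ∈ lineSpan rk (C, A') ∧
      Z ∈ lineSpan rk (C, B') ∧ Z ∈ planeSpan rk b h ∧ rk {X, Y, Z} ≤ 2 := by
  obtain ⟨P, hPa, hPf⟩ := H.exists_mem_lineSpan_inter ha.isLine
    (H.isLineRk_left_of_skewRk hefg.skew₂₃) ha.meet₂
  obtain ⟨Q, hQb, hQg⟩ := H.exists_mem_lineSpan_inter hb.isLine
    (H.isLineRk_right_of_skewRk hefg.skew₂₃) hb.meet₃
  obtain ⟨R, hRh, hRc⟩ := H.exists_mem_lineSpan_inter hh.isLine hc.isLine hh.meet₃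
  have hPde : P ∉ planeSpan rk d e := H.notMem_planeSpan_of_notMem_lineSpan hefg.skew₁₂.symm
    hd.isLine hd.meet₁ hd.meet₂ hPf (H.notMem_lineSpan_of_skewRk had hPa)
  obtain ⟨X, Y, Z, hX, hY, hZ, hXde, hYde, hZde, hXYZ⟩ :=
    H.exists_triangle_section hd.isLine hA.2 (H.notMem_lineSpan_of_skewRk had hA.1)
      (H.ne_of_skewRk habc.skew₁₂ hPa hQb) (H.ne_of_skewRk habc.skew₁₃ hPa hRc)
      (H.ne_of_skewRk habc.skew₂₃ hQb hRc) hPde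
  have hXag : X ∈ planeSpan rk a g := H.lineSpan_subset_planeSpan hPa hQg hX
  have hXbf : X ∈ planeSpan rk b f :=
    H.lineSpan_subset_planeSpan hQb hPf (lineSpan_swap P Q ▸ hX)
  have hYah : Y ∈ planeSpan rk a h := H.lineSpan_subset_planeSpan hPa hRh hY
  have hYcf : Y ∈ planeSpan rk c f :=
    H.lineSpan_subset_planeSpan hRc hPf (lineSpan_swap P R ▸ hY)
  have hZbh : Z ∈ planeSpan rk b h := H.lineSpan_subset_planeSpan hQb hRh hZ
  have hZcg : Z ∈ planeSpan rk c g :=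
    H.lineSpan_subset_planeSpan hRc hQg (lineSpan_swap Q R ▸ hZ)
  have mem_cross {x p q : Pt} {k m : Pt × Pt} (hkd : SkewRk rk k d) (hkm : MeetRk rk k m)
      (hp : p ∈ lineSpan rk k ∩ lineSpan rk e) (hq : q ∈ lineSpan rk d ∩ planeSpan rk k m)
      (hx : x ∈ planeSpan rk k m) (hxde : x ∈ planeSpan rk d e) : x ∈ lineSpan rk (p, q) :=
    H.mem_lineSpan_of_mem_planeSpan_inter hkd hkm hd.meet₁ hp.1 hp.2 hq.1 hq.2 hx hxde
  have hA'k (k) : A' ∈ lineSpan rk d ∩ planeSpan rk k f :=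
    ⟨hA'.1, H.lineSpan_subset_planeSpan_right k f hA'.2⟩
  have hB'k (k) : B' ∈ lineSpan rk d ∩ planeSpan rk k g :=
    ⟨hB'.1, H.lineSpan_subset_planeSpan_right k g hB'.2⟩
  exact ⟨X, Y, Z, mem_cross had ha.meet₃ hA (hB'k a) hXag hXde,
    mem_cross hbd hb.meet₂ hB (hA'k b) hXbf hXde,
    mem_cross had hh.meet₁.symm hA hC' hYah hYde, mem_cross hcd hc.meet₂ hC (hA'k c) hYcf hYde,
    mem_cross hcd hc.meet₃ hC (hB'k c) hZcg hZde, hZbh, hXYZ⟩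

end IsProjectiveRank

namespace PappusRank

theorem rk_cross_points_le_two (hPappus : PappusRank rk) (H : IsSimpleRank rk)
    (hABC : IsTripleIn (lineSpan rk l \ lineSpan rk m) A B C)
    (hABC' : IsTripleIn (lineSpan rk m) A' B' C')
    (hX : X ∈ lineSpan rk (A, B')) (hX' : X ∈ lineSpan rk (B, A'))
    (hY : Y ∈ lineSpan rk (A, C')) (hY' : Y ∈ lineSpan rk (C, A'))
    (hZ : Z ∈ lineSpan rk (B, C')) (hZ' : Z ∈ lineSpan rk (C, B')) : rk {X, Y, Z} ≤ 2 := by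
  obtain ⟨⟨hA, hAm⟩, ⟨hB, hBm⟩, ⟨hC, hCm⟩, hAB, hAC, hBC⟩ := hABC
  obtain ⟨hA', hB', hC', hAB', hAC', hBC'⟩ := hABC'
  have rk_cross : ∀ {p q}, p ∉ lineSpan rk m → q ∈ lineSpan rk m → rk {p, q} = 2 :=
    fun {p q} hp hq => H.rk_pair p q fun hpq => hp (hpq ▸ hq)
  have hsix : 3 ≤ rk {A, B, C, A', B', C'} := by
    have hgt : 2 < rk {A', B', A} := by
      by_contra! hle
      exact hAm (H.lineSpan_subset_rkSpan hA' hB'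
        (mem_lineSpan_of_rk_le (H.rk_pair A' B' hAB') hle))
    exact hgt.trans_le (H.mono _ _ (by grind))
  exact hPappus A B C A' B' C' X Y Z (H.rk_le_two_of_mem_lineSpan hA hB hC)
    (H.rk_le_two_of_mem_lineSpan hA' hB' hC')
    (H.rk_pair A B hAB) (H.rk_pair A C hAC) (H.rk_pair B C hBC)
    (H.rk_pair A' B' hAB') (H.rk_pair A' C' hAC') (H.rk_pair B' C' hBC')
    (rk_cross hAm hA') (rk_cross hAm hB') (rk_cross hAm hC')
    (rk_cross hBm hA') (rk_cross hBm hB') (rk_cross hBm hC')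
    (rk_cross hCm hA') (rk_cross hCm hB') (rk_cross hCm hC') hsix
    (H.rk_le_two_of_mem_lineSpan left_mem_lineSpan right_mem_lineSpan hX)
    (H.rk_le_two_of_mem_lineSpan right_mem_lineSpan left_mem_lineSpan hX')
    (H.rk_le_two_of_mem_lineSpan left_mem_lineSpan right_mem_lineSpan hY)
    (H.rk_le_two_of_mem_lineSpan right_mem_lineSpan left_mem_lineSpan hY')
    (H.rk_le_two_of_mem_lineSpan left_mem_lineSpan right_mem_lineSpan hZ)
    (H.rk_le_two_of_mem_lineSpan right_mem_lineSpan left_mem_lineSpan hZ')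

theorem mem_lineSpan_of_rk_cross_points_le_two (hPappus : PappusRank rk) (H : IsProjectiveRank rk)
    (hlm : MeetRk rk l m) (hABC : IsTripleIn (lineSpan rk l \ lineSpan rk m) A B C)
    (hABC' : IsTripleIn (lineSpan rk m) A' B' C')
    (hA'l : A' ∉ lineSpan rk l) (hB'l : B' ∉ lineSpan rk l)
    (hX : X ∈ lineSpan rk (A, B')) (hX' : X ∈ lineSpan rk (B, A'))
    (hY : Y ∈ lineSpan rk (A, C')) (hY' : Y ∈ lineSpan rk (C, A'))
    (hZ : Z ∈ lineSpan rk (C, B')) (hXYZ : rk {X, Y, Z} ≤ 2) : Z ∈ lineSpan rk (B, C') := by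
  have ⟨⟨hA, hAm⟩, ⟨hB, hBm⟩, ⟨hC, hCm⟩, hAB, hAC, _⟩ := hABC
  have ⟨hA', hB', hC', hAB', _, hBC'⟩ := hABC'
  have line_cross : ∀ {p q}, p ∉ lineSpan rk m → q ∈ lineSpan rk m → IsLineRk rk (p, q) :=
    fun {p q} hp hq => H.rk_pair p q fun hpq => hp (hpq ▸ hq)
  obtain ⟨W, hWBC', hWCB'⟩ : ∃ W, W ∈ lineSpan rk (B, C') ∧ W ∈ lineSpan rk (C, B') :=
    H.exists_mem_lineSpan_inter (line_cross hBm hC') (line_cross hCm hB')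
      ((H.rk_quadruple_le_of_lineSpan_subset (H.lineSpan_subset_planeSpan hB hC')
        (H.lineSpan_subset_planeSpan hC hB')).trans hlm)
  have hXYW : rk {X, Y, W} ≤ 2 := hPappus.rk_cross_points_le_two H.toIsSimpleRank hABC hABC'
    hX hX' hY hY' hWBC' hWCB'
  have hXY : IsLineRk rk (X, Y) := H.rk_pair X Y
    (H.cross_points_ne hA hB hAB hA'l hB' hC' hBC' hAm hX hX' hY)
  have hXCB' : X ∉ lineSpan rk (C, B') :=
    H.cross_point_notMem_lineSpan hA hC hAC hB'l hA' hB' hAB' hBm hX hX'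
  suffices hWZ : W = Z from hWZ ▸ hWBC'
  by_contra hWZ
  exact hXCB' (H.lineSpan_subset_of_mem hWZ (mem_lineSpan_of_rk_le hXY hXYW)
    (mem_lineSpan_of_rk_le hXY hXYZ) hWCB' hZ left_mem_lineSpan)

theorem mem_planeSpan_of_mem_planeSpan (hPappus : PappusRank rk) (H : IsProjectiveRank rk)
    (habc : PairwiseSkewRk rk a b c) (hefg : PairwiseSkewRk rk e f g)
    (had : SkewRk rk a d) (hbd : SkewRk rk b d) (hcd : SkewRk rk c d)
    (hfh : SkewRk rk f h) (hgh : SkewRk rk g h)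
    (ha : IsTransversalRk rk a e f g) (hb : IsTransversalRk rk b e f g)
    (hc : IsTransversalRk rk c e f g) (hd : IsTransversalRk rk d e f g)
    (hh : IsTransversalRk rk h a b c) (hC'd : C' ∈ lineSpan rk d) (hC'ah : C' ∈ planeSpan rk a h) :
    C' ∈ planeSpan rk b h := by
  have he := H.isLineRk_left_of_skewRk hefg.skew₁₂
  have hf := H.isLineRk_left_of_skewRk hefg.skew₂₃
  have hg := H.isLineRk_right_of_skewRk hefg.skew₂₃
  obtain ⟨A, hAa, hAe⟩ := H.exists_mem_lineSpan_inter ha.isLine he ha.meet₁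
  obtain ⟨B, hBb, hBe⟩ := H.exists_mem_lineSpan_inter hb.isLine he hb.meet₁
  obtain ⟨C, hCc, hCe⟩ := H.exists_mem_lineSpan_inter hc.isLine he hc.meet₁
  obtain ⟨A', hA'd, hA'f⟩ := H.exists_mem_lineSpan_inter hd.isLine hf hd.meet₂
  obtain ⟨B', hB'd, hB'g⟩ := H.exists_mem_lineSpan_inter hd.isLine hg hd.meet₃
  have hABC : IsTripleIn (lineSpan rk e \ lineSpan rk d) A B C :=
    ⟨⟨hAe, H.notMem_lineSpan_of_skewRk had hAa⟩, ⟨hBe, H.notMem_lineSpan_of_skewRk hbd hBb⟩,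
      ⟨hCe, H.notMem_lineSpan_of_skewRk hcd hCc⟩, H.ne_of_skewRk habc.skew₁₂ hAa hBb,
      H.ne_of_skewRk habc.skew₁₃ hAa hCc, H.ne_of_skewRk habc.skew₂₃ hBb hCc⟩
  have hA'ah : A' ∉ planeSpan rk a h := H.notMem_planeSpan_of_notMem_lineSpan hfh ha.isLine
    hh.meet₁.symm ha.meet₂ hA'f (H.notMem_lineSpan_of_skewRk had.symm hA'd)
  have hB'ah : B' ∉ planeSpan rk a h := H.notMem_planeSpan_of_notMem_lineSpan hgh ha.isLine
    hh.meet₁.symm ha.meet₃ hB'g (H.notMem_lineSpan_of_skewRk had.symm hB'd)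
  have hABC' : IsTripleIn (lineSpan rk d) A' B' C' :=
    ⟨hA'd, hB'd, hC'd, H.ne_of_skewRk hefg.skew₂₃ hA'f hB'g, fun h => hA'ah (h ▸ hC'ah),
      fun h => hB'ah (h ▸ hC'ah)⟩
  have hA'e : A' ∉ lineSpan rk e := H.notMem_lineSpan_of_skewRk hefg.skew₁₂.symm hA'f
  have hB'e : B' ∉ lineSpan rk e := H.notMem_lineSpan_of_skewRk hefg.skew₁₃.symm hB'g
  obtain ⟨X, Y, Z, hX, hX', hY, hY', hZ, hZbh, hXYZ⟩ := H.exists_cross_points habc hefg had hbd hcd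
    ha hb hc hd hh ⟨hAa, hAe⟩ ⟨hBb, hBe⟩ ⟨hCc, hCe⟩ ⟨hA'd, hA'f⟩ ⟨hB'd, hB'g⟩ ⟨hC'd, hC'ah⟩
  have hZBC' : Z ∈ lineSpan rk (B, C') := hPappus.mem_lineSpan_of_rk_cross_points_le_two H
    hd.meet₁.symm hABC hABC' hA'e hB'e hX hX' hY hY' hZ hXYZ
  have hBZ : B ≠ Z := by
    rintro rfl
    exact hB'e (H.lineSpan_subset_rkSpan hCe hBe (H.mem_lineSpan_exchange hZ hABC.ne₂₃.symm))
  exact H.lineSpan_subset_rkSpan (H.lineSpan_subset_planeSpan_left b h hBb) hZbh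
    (H.mem_lineSpan_exchange hZBC' hBZ)

theorem meetRk_of_skewRk (hPappus : PappusRank rk) (H : IsProjectiveRank rk)
    (habc : PairwiseSkewRk rk a b c) (hefg : PairwiseSkewRk rk e f g)
    (had : SkewRk rk a d) (hbd : SkewRk rk b d) (hcd : SkewRk rk c d)
    (hfh : SkewRk rk f h) (hgh : SkewRk rk g h)
    (ha : IsTransversalRk rk a e f g) (hb : IsTransversalRk rk b e f g)
    (hc : IsTransversalRk rk c e f g) (hd : IsTransversalRk rk d e f g)
    (hh : IsTransversalRk rk h a b c) : MeetRk rk d h := by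
  obtain ⟨R, hRh, hRc⟩ := H.exists_mem_lineSpan_inter hh.isLine hc.isLine hh.meet₃
  obtain ⟨C', hC'ah, hC'd⟩ := H.exists_mem_planeSpan_inter_lineSpan ha.isLine hRh
    (H.notMem_lineSpan_of_skewRk habc.skew₁₃.symm hRc) hd.isLine
  have hC'bh : C' ∈ planeSpan rk b h := hPappus.mem_planeSpan_of_mem_planeSpan H habc hefg
    had hbd hcd hfh hgh ha hb hc hd hh hC'd hC'ah
  exact H.meetRk_of_mem hC'd (H.mem_lineSpan_of_mem_planeSpan_common habc.skew₁₂ hh.isLine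
    hh.meet₁.symm hh.meet₂.symm hC'ah hC'bh)

end PappusRank

end

/-- In a 3D projective incidence space (given by the full rank
axiom system (A1)–(A10)), Pappus's property implies Dandelin–Gallucci's
property. -/
theorem stmt_16 {Pt : Type*} [DecidableEq Pt] (rk : Finset Pt → ℕ)
    (hA1 : ∀ X : Finset Pt, rk X ≤ X.card)
    (hA2 : ∀ X Y : Finset Pt, X ⊆ Y → rk X ≤ rk Y)
    (hA3 : ∀ X Y : Finset Pt, rk (X ∪ Y) + rk (X ∩ Y) ≤ rk X + rk Y)
    (hA4 : ∀ p : Pt, rk {p} = 1)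
    (hA5 : ∀ p q : Pt, p ≠ q → rk {p, q} = 2)
    (hA6 : ∀ A B C D : Pt, rk {A, B, C, D} ≤ 3 →
      ∃ J : Pt, rk {A, B, J} = 2 ∧ rk {C, D, J} = 2)
    (hA7 : ∀ A B : Pt, ∃ C : Pt,
      rk {A, B, C} = 2 ∧ rk {B, C} = 2 ∧ rk {A, C} = 2)
    (hA8 : ∃ P₁ P₂ P₃ P₄ : Pt, rk {P₁, P₂, P₃, P₄} = 4)
    (hA9 : ∀ X : Finset Pt, rk X ≤ 4)
    (hA10 : ∀ A B C A' B' : Pt, rk {A, B, C} = 3 → rk {A', B'} = 2 →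
      ∃ M : Pt, rk {A, B, C, M} = 3 ∧ rk {A', B', M} = 2)
    (hPappus : PappusRank rk) :
    DGRank rk := by
  have H : IsProjectiveRank rk := ⟨⟨⟨hA1, hA2, hA3⟩, hA4, hA5⟩, hA6, hA10⟩
  intro a b c e f g d h la lb lc _ lf lg ld lh ab ac bc ef eg fg ae af ag be bf bg ce cf cg
    de df dg ha hb hc
  have habc : PairwiseSkewRk rk a b c := ⟨ab, ac, bc⟩
  have hefg : PairwiseSkewRk rk e f g := ⟨ef, eg, fg⟩
  have a_efg : IsTransversalRk rk a e f g := ⟨la, ae, af, ag⟩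
  have b_efg : IsTransversalRk rk b e f g := ⟨lb, be, bf, bg⟩
  have c_efg : IsTransversalRk rk c e f g := ⟨lc, ce, cf, cg⟩
  have d_efg : IsTransversalRk rk d e f g := ⟨ld, de, df, dg⟩
  have f_abc : IsTransversalRk rk f a b c := ⟨lf, af.symm, bf.symm, cf.symm⟩
  have g_abc : IsTransversalRk rk g a b c := ⟨lg, ag.symm, bg.symm, cg.symm⟩
  have h_abc : IsTransversalRk rk h a b c := ⟨lh, ha, hb, hc⟩
  by_contra hdh
  have hhd : ¬ MeetRk rk h d := fun hhd => hdh hhd.symm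
  exact hdh <| hPappus.meetRk_of_skewRk H habc hefg
    (H.skewRk_of_isTransversalRk hefg a_efg d_efg ha.symm hdh)
    (H.skewRk_of_isTransversalRk hefg b_efg d_efg hb.symm hdh)
    (H.skewRk_of_isTransversalRk hefg c_efg d_efg hc.symm hdh)
    (H.skewRk_of_isTransversalRk habc f_abc h_abc df.symm hhd)
    (H.skewRk_of_isTransversalRk habc g_abc h_abc dg.symm hhd)
    a_efg b_efg c_efg d_efg h_abc
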